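/- For functions F, G, H in the Schwartz class on ℝ (one time variable), one has |∫_ℝ F·G·H dt| ≤ C(ε)·‖F‖_{H^{1/2-ε}}·‖G‖_{H^{1/2+ε}}·‖H‖_{H^{-1/2+ε}} for any 0 < ε < 1/2, where H^σ(ℝ) is the Sobolev space with norm ‖F‖_{H^σ} = ‖⟨τ⟩^σ F̂‖_{L²}. -/

import Mathlib

open MeasureTheory FourierTransform

noncomputable def sobNorm1 (σ : ℝ) (F : ℝ → ℂ) : ℝ :=
  (∫ τ : ℝ, Real.sqrt (1 + τ ^ 2) ^ (2 * σ) * ‖𝓕 F τ‖ ^ 2) ^ ((1:ℝ)/2)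

noncomputable def jb (x : ℝ) : ℝ := Real.sqrt (1 + x ^ 2)

lemma jb_one_le (x : ℝ) : 1 ≤ jb x := by
  unfold jb
  rw [Real.one_le_sqrt]
  nlinarith [sq_nonneg x]

lemma jb_pos (x : ℝ) : 0 < jb x := lt_of_lt_of_le one_pos (jb_one_le x)

lemma jb_sq (x : ℝ) : jb x ^ 2 = 1 + x ^ 2 := Real.sq_sqrt (by positivity)

lemma jb_neg (x : ℝ) : jb (-x) = jb x := by simp [jb]

lemma jb_add (x y : ℝ) : jb (x + y) ≤ jb x + jb y := by
  have h1 := jb_sq x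
  have h2 := jb_sq y
  have h3 := jb_sq (x + y)
  have hx := jb_pos x
  have hy := jb_pos y
  have hxy : x * y ≤ jb x * jb y := by
    apply le_of_sq_le_sq _ (by positivity)
    rw [mul_pow, mul_pow, h1, h2]
    nlinarith [sq_nonneg x, sq_nonneg y]
  apply le_of_sq_le_sq _ (by positivity)
  nlinarith

lemma measurable_jb : Measurable jb := by
  unfold jb
  fun_prop

lemma weight_ineq {s x y z : ℝ} (hs0 : 0 < s) (hs : s < 1 / 2) (hx : 1 ≤ x) (hy : 1 ≤ y)
    (hz : 1 ≤ z) (hzxy : z ≤ x + y) :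
    1 ≤ x ^ s * y ^ (1 - s) * z ^ (-s) * (2 * y ^ (-(1 - s)) + x ^ (-(1 - s))) := by
  have hx0 : 0 < x := by linarith
  have hy0 : 0 < y := by linarith
  have hz0 : 0 < z := by linarith
  have key : z ^ s ≤ 2 * x ^ s + x ^ (2 * s - 1) * y ^ (1 - s) := by
    have h1 : z ^ s ≤ x ^ s + y ^ s :=
      (Real.rpow_le_rpow hz0.le hzxy hs0.le).trans
        (Real.rpow_add_le_add_rpow hx0.le hy0.le hs0.le (by linarith))
    have hxs : 0 < x ^ s := Real.rpow_pos_of_pos hx0 _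
    rcases le_total y x with h | h
    · have h2 : y ^ s ≤ x ^ s := Real.rpow_le_rpow hy0.le h hs0.le
      have : 0 < x ^ (2 * s - 1) * y ^ (1 - s) := by positivity
      linarith
    · have h2 : y ^ (2 * s - 1) ≤ x ^ (2 * s - 1) :=
        Real.rpow_le_rpow_of_nonpos hx0 h (by linarith)
      have h3 : y ^ s = y ^ (2 * s - 1) * y ^ (1 - s) := by
        rw [← Real.rpow_add hy0]; congr 1; ring
      have h4 : y ^ s ≤ x ^ (2 * s - 1) * y ^ (1 - s) := by
        rw [h3]; gcongr
      linarith
  have e1 : y ^ (1 - s) * y ^ (-(1 - s)) = 1 := by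
    rw [← Real.rpow_add hy0]; simp
  have e2 : x ^ s * x ^ (-(1 - s)) = x ^ (2 * s - 1) := by
    rw [← Real.rpow_add hx0]; congr 1; ring
  have e3 : z ^ s * z ^ (-s) = 1 := by
    rw [← Real.rpow_add hz0]; simp
  calc (1:ℝ) = z ^ s * z ^ (-s) := e3.symm
    _ ≤ (2 * x ^ s + x ^ (2 * s - 1) * y ^ (1 - s)) * z ^ (-s) := by gcongr
    _ = (2 * x ^ s * (y ^ (1 - s) * y ^ (-(1 - s))) +
          (x ^ s * x ^ (-(1 - s))) * y ^ (1 - s)) * z ^ (-s) := by rw [e1, e2]; ring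
    _ = _ := by ring

/-- weight -/
noncomputable def wt (σ : ℝ) (x : ℝ) : ENNReal := ENNReal.ofReal (jb x ^ σ)

lemma measurable_wt (σ : ℝ) : Measurable (wt σ) := by
  unfold wt
  have := measurable_jb
  fun_prop

lemma wt_neg (σ x : ℝ) : wt σ (-x) = wt σ x := by simp [wt, jb_neg]

lemma wt_ineq {s : ℝ} (hs0 : 0 < s) (hs : s < 1 / 2) (a b : ℝ) :
    1 ≤ wt s a * wt (1 - s) b * wt (-s) (a + b) * (2 * wt (-(1 - s)) b + wt (-(1 - s)) a) := by
  have ha := jb_pos a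
  have hb := jb_pos b
  have hab := jb_pos (a + b)
  have h := weight_ineq hs0 hs (jb_one_le a) (jb_one_le b) (jb_one_le (a + b)) (jb_add a b)
  have h2 : (2 : ENNReal) = ENNReal.ofReal 2 := by simp
  unfold wt
  rw [h2, ← ENNReal.ofReal_mul (by positivity), ← ENNReal.ofReal_mul (by positivity),
    ← ENNReal.ofReal_mul (by positivity), ← ENNReal.ofReal_add (by positivity) (by positivity),
    ← ENNReal.ofReal_mul (by positivity)]
  simpa using ENNReal.ofReal_le_ofReal h

noncomputable def nn (A : ℝ → ENNReal) : ENNReal := (∫⁻ x, A x ^ (2:ℝ)) ^ ((1:ℝ)/2)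

lemma cs {A B : ℝ → ENNReal} (hA : Measurable A) (hB : Measurable B) :
    ∫⁻ x, A x * B x ≤ nn A * nn B :=
  ENNReal.lintegral_mul_le_Lp_mul_Lq volume Real.HolderConjugate.two_two
    hA.aemeasurable hB.aemeasurable

lemma nn_shift (A : ℝ → ENNReal) (a : ℝ) : nn (fun b => A (a + b)) = nn A := by
  unfold nn
  rw [lintegral_add_left_eq_self (fun b => A b ^ (2:ℝ)) a]

lemma nn_neg (A : ℝ → ENNReal) : nn (fun b => A (-b)) = nn A := by
  unfold nn
  rw [lintegral_neg_eq_self (fun b => A b ^ (2:ℝ))]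

lemma young {U B D : ℝ → ENNReal} (hU : Measurable U) (hB : Measurable B) (hD : Measurable D) :
    ∫⁻ a, ∫⁻ b, U a * (B b * D (a + b)) ≤ (∫⁻ a, U a) * (nn B * nn D) := by
  rw [← lintegral_mul_const _ hU]
  apply lintegral_mono
  intro a
  dsimp only
  rw [lintegral_const_mul _ (by fun_prop)]
  gcongr
  rw [← nn_shift D a]
  exact cs hB (by fun_prop)

lemma trilin {A B D w : ℝ → ENNReal} (hA : Measurable A) (hB : Measurable B) (hD : Measurable D)
    (hw : Measurable w) :
    ∫⁻ a, ∫⁻ b, A a * B b * D (a + b) * (2 * w b + w a) ≤ 3 * nn w * (nn A * nn B * nn D) := by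
  have h1 : ∫⁻ a, ∫⁻ b, (B b * w b) * (A a * D (a + b)) ≤ (nn B * nn w) * (nn A * nn D) := by
    rw [lintegral_lintegral_swap (by
      apply Measurable.aemeasurable
      unfold Function.uncurry
      fun_prop)]
    calc ∫⁻ b, ∫⁻ a, (B b * w b) * (A a * D (a + b))
        = ∫⁻ b, ∫⁻ a, (B b * w b) * (A a * D (b + a)) := by
            congr 1; ext b; congr 1; ext a; rw [add_comm a b]
      _ ≤ _ := young (U := fun b => B b * w b) (by fun_prop) hA hD
      _ ≤ _ := by gcongr; exact cs hB hw
  have h2 : ∫⁻ a, ∫⁻ b, (A a * w a) * (B b * D (a + b)) ≤ (nn A * nn w) * (nn B * nn D) := by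
    calc _ ≤ _ := young (U := fun b => A b * w b) (by fun_prop) hB hD
      _ ≤ _ := by gcongr; exact cs hA hw
  calc ∫⁻ a, ∫⁻ b, A a * B b * D (a + b) * (2 * w b + w a)
      = ∫⁻ a, ∫⁻ b, (2 * ((B b * w b) * (A a * D (a + b))) +
          (A a * w a) * (B b * D (a + b))) := by
        congr 1; ext a; congr 1; ext b; ring
    _ = 2 * (∫⁻ a, ∫⁻ b, (B b * w b) * (A a * D (a + b))) +
          ∫⁻ a, ∫⁻ b, (A a * w a) * (B b * D (a + b)) := by
        rw [← lintegral_const_mul _ (by fun_prop), ← lintegral_add_left (by fun_prop)]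
        congr 1; ext a
        rw [← lintegral_const_mul _ (by fun_prop), ← lintegral_add_left (by fun_prop)]
    _ ≤ 2 * ((nn B * nn w) * (nn A * nn D)) + (nn A * nn w) * (nn B * nn D) := by gcongr
    _ = _ := by ring

lemma nn_wt_lt_top {r : ℝ} (hr : 1 / 2 < r) : nn (wt (-r)) ≠ ⊤ := by
  have h := integrable_rpow_neg_one_add_norm_sq (E := ℝ) (μ := volume) (r := 2 * r)
    (by simp; linarith)
  have h2 := h.lintegral_lt_top
  unfold nn
  apply ENNReal.rpow_ne_top_of_nonneg (by norm_num)
  convert h2.ne using 3 with x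
  have hx := jb_pos x
  unfold wt
  rw [ENNReal.ofReal_rpow_of_nonneg (by positivity) (by norm_num), Real.norm_eq_abs, sq_abs,
    ← jb_sq, ← Real.rpow_mul hx.le, ← Real.rpow_natCast, ← Real.rpow_mul hx.le]
  congr 2
  push_cast
  ring

lemma sob_integrable {σ : ℝ} (hσ : σ ≤ 1) (f : SchwartzMap ℝ ℂ) :
    Integrable (fun τ : ℝ => jb τ ^ (2 * σ) * ‖f τ‖ ^ 2) := by
  obtain ⟨K, hK⟩ := f.decay 0 0
  have hK' : ∀ x, ‖f x‖ ≤ K := by simpa using hK.2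
  have h1 := (f.integrable_pow_mul volume 2)
  have h0 := (f.integrable_pow_mul volume 0)
  refine ((h0.add h1).const_mul K).mono' ?_ (Filter.Eventually.of_forall fun x => ?_)
  · apply Measurable.aestronglyMeasurable
    have := measurable_jb
    have := f.continuous.measurable
    fun_prop
  · have hx := jb_pos x
    rw [Real.norm_of_nonneg (by positivity)]
    have h2 : jb x ^ (2 * σ) ≤ 1 + x ^ 2 := by
      rw [← jb_sq, ← Real.rpow_natCast]
      apply Real.rpow_le_rpow_of_exponent_le (jb_one_le x)
      push_cast; linarith
    have h3 := hK' x
    simp only [Pi.add_apply, Real.norm_eq_abs, sq_abs, pow_zero, one_mul]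
    calc jb x ^ (2 * σ) * ‖f x‖ ^ 2 ≤ (1 + x ^ 2) * (K * ‖f x‖) := by
          gcongr
          rw [sq]
          gcongr
      _ = _ := by ring

lemma nn_eq_sob {σ : ℝ} (hσ : σ ≤ 1) (F : SchwartzMap ℝ ℂ) :
    nn (fun x => wt σ x * ‖𝓕 F x‖ₑ) = ENNReal.ofReal (sobNorm1 σ F) := by
  have h := sob_integrable hσ (𝓕 F)
  have hnn : ∀ x, 0 ≤ jb x ^ (2 * σ) * ‖𝓕 F x‖ ^ 2 := fun x => by
    have := jb_pos x
    positivity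
  have e : sobNorm1 σ F = (∫ τ : ℝ, jb τ ^ (2 * σ) * ‖𝓕 F τ‖ ^ 2) ^ ((1:ℝ)/2) := rfl
  rw [e, ← ENNReal.ofReal_rpow_of_nonneg (integral_nonneg hnn) (by norm_num),
    ofReal_integral_eq_lintegral_ofReal h (Filter.Eventually.of_forall hnn)]
  unfold nn
  congr 2
  ext x
  have hx := jb_pos x
  unfold wt
  dsimp only
  rw [← ofReal_norm, ← ENNReal.ofReal_mul (by positivity),
    ENNReal.ofReal_rpow_of_nonneg (by positivity) (by norm_num),
    Real.mul_rpow (by positivity) (by positivity), ← Real.rpow_mul hx.le]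
  congr 2
  · ring_nf
  · norm_num

lemma mult_formula (F : SchwartzMap ℝ ℂ) {φ : ℝ → ℂ} (hφ : Integrable φ) :
    ∫ t, F t * φ t = ∫ a, 𝓕 F (-a) * 𝓕 φ a := by
  have h := VectorFourier.integral_bilin_fourierIntegral_eq_flip (ContinuousLinearMap.mul ℂ ℂ)
    (L := innerₗ ℝ) Real.continuous_fourierChar continuous_inner ((𝓕⁻ F).integrable (μ := volume)) hφ
  have h' : ∫ t, 𝓕 (𝓕⁻ F) t * φ t = ∫ a, (𝓕⁻ F) a * 𝓕 φ a := by
    simp only [flip_innerₗ, ContinuousLinearMap.mul_apply'] at h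
    exact h
  rw [fourier_fourierInv_eq] at h'
  rw [h']
  rfl

lemma fourier_mod (H : ℝ → ℂ) (a b : ℝ) :
    𝓕 (fun t => Real.fourierChar (-(t * a)) • H t) b = 𝓕 H (a + b) := by
  rw [Real.fourier_real_eq, Real.fourier_real_eq]
  congr 1
  ext v
  rw [smul_smul, ← AddChar.map_add_eq_mul]
  congr 2
  ring

lemma fourier_prod (G H : SchwartzMap ℝ ℂ) (a : ℝ) :
    𝓕 (fun t => G t * H t) a = ∫ b, 𝓕 G (-b) * 𝓕 H (a + b) := by
  have hi : Integrable (fun t => Real.fourierChar (-(t * a)) • H t) := by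
    have := (Real.fourierIntegral_convergent_iff (μ := volume) (f := (H : ℝ → ℂ)) a).2 H.integrable
    simpa [mul_comm] using this
  have h := mult_formula G hi
  simp_rw [fourier_mod] at h
  rw [SchwartzMap.fourier_coe H, ← h, Real.fourier_real_eq]
  congr 1
  ext v
  simp only [Circle.smul_def, smul_eq_mul]
  ring

lemma enorm_bound (F G H : SchwartzMap ℝ ℂ) :
    ‖∫ t : ℝ, F t * G t * H t‖ₑ ≤
      ∫⁻ a, ∫⁻ b, ‖𝓕 F (-a)‖ₑ * (‖𝓕 G (-b)‖ₑ * ‖𝓕 H (a + b)‖ₑ) := by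
  have hi : Integrable (fun t => G t * H t) := by
    obtain ⟨K, hK⟩ := G.decay 0 0
    have hK' : ∀ x, ‖G x‖ ≤ K := by simpa using hK.2
    exact H.integrable.bdd_mul G.continuous.aestronglyMeasurable
      (Filter.Eventually.of_forall hK')
  simp_rw [mul_assoc]
  rw [mult_formula F hi]
  refine (enorm_integral_le_lintegral_enorm _).trans (lintegral_mono fun a => ?_)
  have hG := (𝓕 G).continuous.measurable
  have hH := (𝓕 H).continuous.measurable
  rw [lintegral_const_mul _ (by fun_prop), enorm_mul, fourier_prod]
  gcongr
  refine (enorm_integral_le_lintegral_enorm _).trans (lintegral_mono fun b => ?_)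
  rw [enorm_mul]

lemma main_bound {s : ℝ} (hs0 : 0 < s) (hs : s < 1 / 2) (F G H : SchwartzMap ℝ ℂ) :
    ‖∫ t : ℝ, F t * G t * H t‖ₑ ≤ 3 * nn (wt (-(1 - s))) *
      (ENNReal.ofReal (sobNorm1 s F) * ENNReal.ofReal (sobNorm1 (1 - s) G) *
        ENNReal.ofReal (sobNorm1 (-s) H)) := by
  have hF := (𝓕 F).continuous.measurable
  have hG := (𝓕 G).continuous.measurable
  have hH := (𝓕 H).continuous.measurable
  have w1 := measurable_wt s
  have w2 := measurable_wt (1 - s)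
  have w3 := measurable_wt (-s)
  have w4 := measurable_wt (-(1 - s))
  have T := trilin (A := fun x => wt s (-x) * ‖𝓕 F (-x)‖ₑ)
    (B := fun x => wt (1 - s) (-x) * ‖𝓕 G (-x)‖ₑ)
    (D := fun x => wt (-s) x * ‖𝓕 H x‖ₑ) (by fun_prop) (by fun_prop) (by fun_prop) w4
  rw [nn_neg (fun x => wt s x * ‖𝓕 F x‖ₑ), nn_neg (fun x => wt (1 - s) x * ‖𝓕 G x‖ₑ),
    nn_eq_sob (by linarith), nn_eq_sob (by linarith), nn_eq_sob (by linarith)] at T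
  refine (enorm_bound F G H).trans (le_trans ?_ T)
  refine lintegral_mono fun a => lintegral_mono fun b => ?_
  dsimp only
  rw [wt_neg, wt_neg]
  calc ‖𝓕 F (-a)‖ₑ * (‖𝓕 G (-b)‖ₑ * ‖𝓕 H (a + b)‖ₑ)
      = 1 * (‖𝓕 F (-a)‖ₑ * (‖𝓕 G (-b)‖ₑ * ‖𝓕 H (a + b)‖ₑ)) := (one_mul _).symm
    _ ≤ (wt s a * wt (1 - s) b * wt (-s) (a + b) *
          (2 * wt (-(1 - s)) b + wt (-(1 - s)) a)) *
          (‖𝓕 F (-a)‖ₑ * (‖𝓕 G (-b)‖ₑ * ‖𝓕 H (a + b)‖ₑ)) := by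
        gcongr
        exact wt_ineq hs0 hs a b
    _ = _ := by ring

lemma sob_nonneg (σ : ℝ) (F : ℝ → ℂ) : 0 ≤ sobNorm1 σ F := by
  unfold sobNorm1
  apply Real.rpow_nonneg
  apply integral_nonneg
  intro x
  positivity

/-- Temporal trilinear estimate: |∫ FGH| ≲ ‖F‖_{H^{1/2-ε}} ‖G‖_{H^{1/2+ε}} ‖H‖_{H^{-1/2+ε}}. -/
theorem stmt_8 (ε : ℝ) (hε : 0 < ε) (hε' : ε < 1/2) :
    ∃ C > 0, ∀ F G H : SchwartzMap ℝ ℂ,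
      ‖∫ t : ℝ, F t * G t * H t‖
        ≤ C * sobNorm1 (1/2 - ε) F * sobNorm1 (1/2 + ε) G * sobNorm1 (-(1/2) + ε) H := by
  have hfin := nn_wt_lt_top (r := 1 - (1 / 2 - ε)) (by linarith)
  set N := nn (wt (-(1 - (1 / 2 - ε)))) with hN
  refine ⟨3 * N.toReal + 1, by positivity, fun F G H => ?_⟩
  have h := main_bound (s := 1 / 2 - ε) (by linarith) (by linarith) F G H
  rw [← hN] at h
  have e1 : (1:ℝ) - (1 / 2 - ε) = 1 / 2 + ε := by ring
  have e2 : -((1:ℝ) / 2 - ε) = -(1 / 2) + ε := by ring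
  rw [e1, e2] at h
  have p1 := sob_nonneg (1 / 2 - ε) F
  have p2 := sob_nonneg (1 / 2 + ε) G
  have p3 := sob_nonneg (-(1 / 2) + ε) H
  have h' := ENNReal.toReal_mono (by finiteness) h
  simp only [toReal_enorm, ENNReal.toReal_mul, ENNReal.toReal_ofReal p1,
    ENNReal.toReal_ofReal p2, ENNReal.toReal_ofReal p3, ENNReal.toReal_ofNat] at h'
  refine h'.trans ?_
  have : 0 ≤ sobNorm1 (1 / 2 - ε) F * sobNorm1 (1 / 2 + ε) G * sobNorm1 (-(1 / 2) + ε) H := by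
    positivity
  nlinarith
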